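/- arXiv:2203.16836 — 2 statements merged into one kernel-verified Lean document; each statement's English description precedes it below -/
import Mathlib

section
/- Let 𝒜 be a complete normed algebra over ℂ with unit, and let A, B ∈ 𝒜 satisfy ⁅A, ⁅A, B⁆⁆ = 0 and ⁅B, ⁅A, B⁆⁆ = 0. Then for every real number η, ⁅exp(iηA), exp(iηB)⁆ = exp(iηB) · (exp(−η²·⁅A, B⁆) − 1) · exp(iηA). -/
open NormedSpace Complex

theorem glauber_semiconj {𝒜 : Type*} [NormedRing 𝒜] [NormedAlgebra ℂ 𝒜]
    [CompleteSpace 𝒜] (X Y C : 𝒜) (hC : X * Y - Y * X = C) (hX : Commute X C) :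
    SemiconjBy (exp X) Y (Y + C) := by
  letI : NormedAlgebra ℚ 𝒜 := NormedAlgebra.restrictScalars ℚ ℂ 𝒜
  have hinv : ∀ t : ℂ, exp (t • X) * exp (t • (-X)) = 1 := by
    intro t
    rw [← exp_add_of_commute]
    · simp
    · rw [smul_neg]; exact (Commute.refl _).neg_right
  have hinv' : ∀ t : ℂ, exp (t • (-X)) * exp (t • X) = 1 := by
    intro t
    rw [← exp_add_of_commute]
    · simp
    · rw [smul_neg]; exact (Commute.refl _).neg_left
  have hd : ∀ t : ℂ, HasDerivAt
      (fun u : ℂ => exp (u • X) * Y * exp (u • (-X)) - u • C) 0 t := by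
    intro t
    have h1 := hasDerivAt_exp_smul_const (𝕂 := ℂ) X t
    have h2 := hasDerivAt_exp_smul_const' (𝕂 := ℂ) (-X) t
    have h3 := ((h1.mul_const Y).mul h2).sub ((hasDerivAt_id t).smul_const C)
    refine h3.congr_deriv ?_
    have hc : Commute (exp (t • X)) C := (hX.smul_left t).exp_left
    have : exp (t • X) * X * Y * exp (t • (-X)) + exp (t • X) * Y * (-X * exp (t • (-X)))
        = exp (t • X) * (X * Y - Y * X) * exp (t • (-X)) := by noncomm_ring
    rw [this, hC, hc.eq, mul_assoc, hinv, mul_one, one_smul, sub_self]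
  have hconst := is_const_of_deriv_eq_zero (fun t => (hd t).differentiableAt)
    (fun t => (hd t).deriv) 1 0
  have h := hinv' 1
  simp only [one_smul, zero_smul, NormedSpace.exp_zero, one_mul, mul_one, sub_zero] at hconst h
  have h4 : exp X * Y * exp (-X) = Y + C := sub_eq_iff_eq_add.mp hconst
  change exp X * Y = (Y + C) * exp X
  rw [← h4, mul_assoc _ (exp (-X)), h, mul_one]



/-- Commutator form of the Glauber identity in a unital complex Banach algebra:
if `⁅A, ⁅A, B⁆⁆ = 0` and `⁅B, ⁅A, B⁆⁆ = 0`, then for every real `η`,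
`⁅exp(iηA), exp(iηB)⁆ = exp(iηB) * (exp(−η²•⁅A,B⁆) − 1) * exp(iηA)`. -/
theorem commutator_exp_glauber {𝒜 : Type*} [NormedRing 𝒜] [NormedAlgebra ℂ 𝒜]
    [CompleteSpace 𝒜] (A B : 𝒜)
    (hA : ⁅A, ⁅A, B⁆⁆ = 0) (hB : ⁅B, ⁅A, B⁆⁆ = 0) (η : ℝ) :
    ⁅exp (((η : ℂ) * I) • A), exp (((η : ℂ) * I) • B)⁆ =
      exp (((η : ℂ) * I) • B) * (exp ((-(η : ℂ) ^ 2) • ⁅A, B⁆) - 1) *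
        exp (((η : ℂ) * I) • A) := by
  letI : NormedAlgebra ℚ 𝒜 := NormedAlgebra.restrictScalars ℚ ℂ 𝒜
  have hA' : Commute A ⁅A, B⁆ := by
    rw [Ring.lie_def, sub_eq_zero] at hA; exact hA
  have hB' : Commute B ⁅A, B⁆ := by
    rw [Ring.lie_def, sub_eq_zero] at hB; exact hB
  have hs : ((η : ℂ) * I) * ((η : ℂ) * I) = -(η : ℂ) ^ 2 := by
    linear_combination (η : ℂ) ^ 2 * I_mul_I
  have key := (glauber_semiconj (((η : ℂ) * I) • A) (((η : ℂ) * I) • B)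
    ((-(η : ℂ) ^ 2) • ⁅A, B⁆)
    (by rw [smul_mul_smul_comm, smul_mul_smul_comm, hs, ← smul_sub, Ring.lie_def])
    ((hA'.smul_left _).smul_right _)).exp_right
  rw [exp_add_of_commute ((hB'.smul_left _).smul_right _)] at key
  rw [Ring.lie_def (NormedSpace.exp _), key.eq]
  noncomm_ring
end

section
/- For all real numbers η and ε, setting s = sinh(2ε) and c = cosh(2ε), the 4×4 complex matrix T defined entrywise (rows then columns, indices 1..4) by row 1 = (e^{−η²s}−1, e^{−iη²c}−1, e^{η²s}−1, e^{iη²c}−1), row 2 = (e^{iη²c}−1, e^{−η²s}−1, e^{−iη²c}−1, e^{η²s}−1), row 3 = (e^{η²s}−1, e^{iη²c}−1, e^{−η²s}−1, e^{−iη²c}−1), row 4 = (e^{−iη²c}−1, e^{η²s}−1, e^{iη²c}−1, e^{−η²s}−1), satisfies the spectral decomposition T = λ₁·P₁ + λ₂·P₂ + λ₃·P₃ + λ₄·P₄, where λ₁ = 2(cosh(η²s) − cos(η²c)), λ₂ = 2(cosh(η²s) + cos(η²c) − 2), λ₃ = −2(sinh(η²s) − sin(η²c)), λ₄ = −2(sinh(η²s)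 + sin(η²c)), and Pₖ is the rank-one matrix with entries (Pₖ)_{a,b} = conj(wₖ(a))·wₖ(b) for the row vectors w₁ = ½(1,−1,1,−1), w₂ = ½(1,1,1,1), w₃ = ½(1,−i,−1,i), w₄ = ½(1,i,−1,−i) in ℂ⁴. -/
open Complex

/-- The Hermitian circulant matrix `T` of the paper, with `s = sinh(2ε)`, `c = cosh(2ε)`. -/
noncomputable def gkpT (η ε : ℝ) : Matrix (Fin 4) (Fin 4) ℂ :=
  let s : ℝ := Real.sinh (2 * ε)
  let c : ℝ := Real.cosh (2 * ε)
  !![exp (-(η ^ 2 * s : ℝ)) - 1, exp (-(I * (η ^ 2 * c : ℝ))) - 1,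
       exp ((η ^ 2 * s : ℝ)) - 1, exp (I * (η ^ 2 * c : ℝ)) - 1;
     exp (I * (η ^ 2 * c : ℝ)) - 1, exp (-(η ^ 2 * s : ℝ)) - 1,
       exp (-(I * (η ^ 2 * c : ℝ))) - 1, exp ((η ^ 2 * s : ℝ)) - 1;
     exp ((η ^ 2 * s : ℝ)) - 1, exp (I * (η ^ 2 * c : ℝ)) - 1,
       exp (-(η ^ 2 * s : ℝ)) - 1, exp (-(I * (η ^ 2 * c : ℝ))) - 1;
     exp (-(I * (η ^ 2 * c : ℝ))) - 1, exp ((η ^ 2 * s : ℝ)) - 1,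
       exp (I * (η ^ 2 * c : ℝ)) - 1, exp (-(η ^ 2 * s : ℝ)) - 1]

/-- The eigenvalues `λ₁, λ₂, λ₃, λ₄` of `T`. -/
noncomputable def gkpLambda (η ε : ℝ) : Fin 4 → ℝ :=
  let s : ℝ := Real.sinh (2 * ε)
  let c : ℝ := Real.cosh (2 * ε)
  ![2 * (Real.cosh (η ^ 2 * s) - Real.cos (η ^ 2 * c)),
    2 * (Real.cosh (η ^ 2 * s) + Real.cos (η ^ 2 * c) - 2),
    -2 * (Real.sinh (η ^ 2 * s) - Real.sin (η ^ 2 * c)),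
    -2 * (Real.sinh (η ^ 2 * s) + Real.sin (η ^ 2 * c))]

/-- The eigenvectors `w₁, w₂, w₃, w₄` (as row vectors in `ℂ⁴`). -/
noncomputable def gkpW : Fin 4 → Fin 4 → ℂ :=
  ![![1 / 2, -(1 / 2), 1 / 2, -(1 / 2)],
    ![1 / 2, 1 / 2, 1 / 2, 1 / 2],
    ![1 / 2, -(I / 2), -(1 / 2), I / 2],
    ![1 / 2, I / 2, -(1 / 2), -(I / 2)]]

/-- The rank-one spectral projector `Pₖ` with entries `(Pₖ)_{a,b} = conj(wₖ(a))·wₖ(b)`. -/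
noncomputable def gkpP (k : Fin 4) : Matrix (Fin 4) (Fin 4) ℂ :=
  Matrix.of fun a b => (starRingEnd ℂ) (gkpW k a) * gkpW k b

/-- Spectral decomposition `T = λ₁·P₁ + λ₂·P₂ + λ₃·P₃ + λ₄·P₄`. -/
theorem gkpT_spectral_decomposition (η ε : ℝ) :
    gkpT η ε =
      (gkpLambda η ε 0 : ℂ) • gkpP 0 + (gkpLambda η ε 1 : ℂ) • gkpP 1 +
        (gkpLambda η ε 2 : ℂ) • gkpP 2 + (gkpLambda η ε 3 : ℂ) • gkpP 3 := by
  have h1 : ∀ x : ℂ, exp x = cosh x + sinh x := fun x => (cosh_add_sinh x).symm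
  have h2 : ∀ x : ℂ, exp (-x) = cosh x - sinh x := fun x => (cosh_sub_sinh x).symm
  have h3 : ∀ x : ℂ, exp (I * x) = cos x + sin x * I := fun x => by
    rw [mul_comm, exp_mul_I]
  have h4 : ∀ x : ℂ, exp (-(I * x)) = cos x - sin x * I := fun x => by
    rw [show -(I * x) = (-x) * I by ring, exp_mul_I, cos_neg, sin_neg]; ring
  have hI : I ^ 2 = -1 := I_sq
  unfold gkpT gkpLambda gkpP gkpW
  generalize Real.sinh (2 * ε) = s
  generalize Real.cosh (2 * ε) = c
  dsimp only
  generalize η ^ 2 * s = x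
  generalize η ^ 2 * c = y
  have hc : (starRingEnd ℂ) 2 = 2 := Complex.conj_ofNat 2
  ext a b
  fin_cases a <;> fin_cases b <;> simp [Complex.conj_I, hc] <;>
    simp only [h4, h3, h2, h1] <;> ring_nf <;>
    (try simp only [hI]) <;> (try ring_nf)
end
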